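/- (Convergence of the iterative Chebyshev polynomial approximation algorithm.) Let S₁,…,S_d be pairwise commuting N×N complex matrices whose joint spectrum Λ = {λ_1,…,λ_N} is contained in the real cube [μ,ν] = [μ₁,ν₁] × ⋯ × [μ_d,ν_d], let h be a multivariate polynomial such that H = h(S₁,…,S_d) is invertible, and let g be a multivariate polynomial (in particular, the degree-K partial sum of the shifted Chebyshev expansion of 1/h on [μ,ν]) satisfying β := sup_{t ∈ [μ,ν]} |1 − h(t) g(t)| < 1. Then for every b ∈ ℂ^N the iterates x⁽ᵐ⁾ of the iterative approximation algorithm with G = g(S₁,…,S_d) converge exponentially to H⁻¹ b: for every r with β < r < 1 there exists C > 0 such that ‖x⁽ᵐ⁾ − H⁻¹ b‖₂ ≤ C ‖H⁻¹ b‖₂ rᵐ for all m ≥ 1. -/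

import Mathlib

open Matrix

/-- The Euclidean (ℓ²) norm of a vector in ℂ^N. -/
noncomputable def l2norm {N : ℕ} (v : Fin N → ℂ) : ℝ :=
  ‖(EuclideanSpace.equiv (Fin N) ℂ).symm v‖

/-- The polynomial graph filter `h(S₁,…,S_d) = ∑ h_{l₁,…,l_d} S₁^{l₁}⋯S_d^{l_d}` associated with
a multivariate polynomial `h` and matrices `S₁,…,S_d`. -/
noncomputable def polyFilter {N d : ℕ} (S : Fin d → Matrix (Fin N) (Fin N) ℂ)
    (h : MvPolynomial (Fin d) ℂ) : Matrix (Fin N) (Fin N) ℂ :=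
  ∑ m ∈ h.support, h.coeff m • (List.ofFn fun k => S k ^ m k).prod

/-- `U M Uᴴ` is upper triangular with diagonal `c`. -/
def TriDiag {N : ℕ} (U M : Matrix (Fin N) (Fin N) ℂ) (c : Fin N → ℂ) : Prop :=
  (U * M * Uᴴ).BlockTriangular (id : Fin N → Fin N) ∧ ∀ i, (U * M * Uᴴ) i i = c i

theorem TriDiag.one {N : ℕ} {U : Matrix (Fin N) (Fin N) ℂ} (hU : U * Uᴴ = 1) :
    TriDiag U 1 (fun _ => 1) := by
  refine ⟨?_, fun i => ?_⟩
  · rw [mul_one, hU]; exact Matrix.blockTriangular_one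
  · rw [mul_one, hU]; simp

theorem TriDiag.mul {N : ℕ} {U A B : Matrix (Fin N) (Fin N) ℂ} {a b : Fin N → ℂ}
    (hU : Uᴴ * U = 1) (hA : TriDiag U A a) (hB : TriDiag U B b) :
    TriDiag U (A * B) (fun i => a i * b i) := by
  have key : U * (A * B) * Uᴴ = (U * A * Uᴴ) * (U * B * Uᴴ) := by
    calc U * (A * B) * Uᴴ = U * A * 1 * B * Uᴴ := by simp only [mul_assoc, one_mul]
      _ = _ := by rw [← hU]; simp only [mul_assoc]
  refine ⟨?_, fun i => ?_⟩
  · rw [key]; exact hA.1.mul hB.1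
  · rw [key, Matrix.mul_apply, Finset.sum_eq_single i]
    · rw [hA.2, hB.2]
    · intro j _ hj
      rcases lt_or_gt_of_ne hj with h | h
      · rw [hA.1 h, zero_mul]
      · rw [hB.1 h, mul_zero]
    · simp

theorem TriDiag.add {N : ℕ} {U A B : Matrix (Fin N) (Fin N) ℂ} {a b : Fin N → ℂ}
    (hA : TriDiag U A a) (hB : TriDiag U B b) :
    TriDiag U (A + B) (fun i => a i + b i) := by
  refine ⟨?_, fun i => ?_⟩
  · rw [mul_add, add_mul]; exact hA.1.add hB.1
  · rw [mul_add, add_mul, Matrix.add_apply, hA.2, hB.2]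

theorem TriDiag.smul {N : ℕ} {U A : Matrix (Fin N) (Fin N) ℂ} {a : Fin N → ℂ}
    (k : ℂ) (hA : TriDiag U A a) :
    TriDiag U (k • A) (fun i => k * a i) := by
  refine ⟨?_, fun i => ?_⟩
  · rw [mul_smul_comm, smul_mul_assoc]
    intro i j hij
    rw [Matrix.smul_apply, hA.1 hij, smul_zero]
  · rw [mul_smul_comm, smul_mul_assoc, Matrix.smul_apply, hA.2, smul_eq_mul]

theorem TriDiag.sub {N : ℕ} {U A B : Matrix (Fin N) (Fin N) ℂ} {a b : Fin N → ℂ}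
    (hA : TriDiag U A a) (hB : TriDiag U B b) :
    TriDiag U (A - B) (fun i => a i - b i) := by
  have := hA.add (hB.smul (-1))
  simpa [sub_eq_add_neg] using this

theorem TriDiag.pow {N : ℕ} {U A : Matrix (Fin N) (Fin N) ℂ} {a : Fin N → ℂ}
    (hU : Uᴴ * U = 1) (hU' : U * Uᴴ = 1) (hA : TriDiag U A a) (n : ℕ) :
    TriDiag U (A ^ n) (fun i => a i ^ n) := by
  induction n with
  | zero => simpa using TriDiag.one hU'
  | succ n ih => simpa only [pow_succ] using ih.mul hU hA

theorem TriDiag.sum {N : ℕ} {U : Matrix (Fin N) (Fin N) ℂ} {ι : Type*} (s : Finset ι)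
    (A : ι → Matrix (Fin N) (Fin N) ℂ) (a : ι → Fin N → ℂ)
    (hA : ∀ k, TriDiag U (A k) (a k)) :
    TriDiag U (∑ k ∈ s, A k) (fun i => ∑ k ∈ s, a k i) := by
  classical
  induction s using Finset.induction_on with
  | empty => simp [TriDiag, Matrix.blockTriangular_zero]
  | insert k s hk ih =>
    simp only [Finset.sum_insert hk]
    exact (hA k).add ih

theorem TriDiag.listProd {N : ℕ} {U : Matrix (Fin N) (Fin N) ℂ}
    (hU : Uᴴ * U = 1) (hU' : U * Uᴴ = 1) {d : ℕ}
    (A : Fin d → Matrix (Fin N) (Fin N) ℂ) (a : Fin d → Fin N → ℂ)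
    (hA : ∀ k, TriDiag U (A k) (a k)) :
    TriDiag U (List.ofFn A).prod (fun i => ∏ k, a k i) := by
  induction d with
  | zero => simpa using TriDiag.one hU'
  | succ d ih =>
    simp only [List.ofFn_succ, List.prod_cons, Fin.prod_univ_succ]
    exact (hA 0).mul hU (ih _ _ fun k => hA k.succ)

theorem TriDiag.polyFilter {N d : ℕ} {U : Matrix (Fin N) (Fin N) ℂ}
    (hU : Uᴴ * U = 1) (hU' : U * Uᴴ = 1)
    (S : Fin d → Matrix (Fin N) (Fin N) ℂ) (lam : Fin N → Fin d → ℂ)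
    (hS : ∀ k, TriDiag U (S k) (fun i => lam i k)) (h : MvPolynomial (Fin d) ℂ) :
    TriDiag U (polyFilter S h) (fun i => MvPolynomial.eval (lam i) h) := by
  simp only [MvPolynomial.eval_eq']
  exact TriDiag.sum _ _ _ fun m => TriDiag.smul _
    (TriDiag.listProd hU hU' _ _ fun k => (hS k).pow hU hU' (m k))

theorem TriDiag.mem_spectrum {N : ℕ} {U A : Matrix (Fin N) (Fin N) ℂ} {a : Fin N → ℂ}
    (hU : Uᴴ * U = 1) (hU' : U * Uᴴ = 1) (hA : TriDiag U A a) {k : ℂ}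
    (hk : k ∈ spectrum ℂ A) : ∃ i, k = a i := by
  by_contra! hne
  rw [spectrum.mem_iff, Algebra.algebraMap_eq_smul_one] at hk
  apply hk
  have hT := ((TriDiag.one hU').smul k).sub hA
  rw [Matrix.isUnit_iff_isUnit_det, isUnit_iff_ne_zero]
  have hdet : (U * (k • (1 : Matrix (Fin N) (Fin N) ℂ) - A) * Uᴴ).det
      = (k • (1 : Matrix (Fin N) (Fin N) ℂ) - A).det := by
    rw [Matrix.det_mul, Matrix.det_mul, mul_right_comm, ← Matrix.det_mul, hU', Matrix.det_one,
      one_mul]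
  rw [← hdet, Matrix.det_of_upperTriangular hT.1]
  refine Finset.prod_ne_zero_iff.2 fun i _ => ?_
  rw [hT.2, mul_one]
  exact sub_ne_zero.2 (hne i)

open scoped Matrix.Norms.L2Operator in
theorem exists_pow_bound {N : ℕ} (A : Matrix (Fin N) (Fin N) ℂ) (β r : ℝ) (hβ0 : 0 ≤ β)
    (hr : β < r) (hA : ∀ k ∈ spectrum ℂ A, ‖k‖ ≤ β) :
    ∃ C : ℝ, 0 < C ∧ ∀ (m : ℕ) (v : Fin N → ℂ),
      l2norm ((A ^ m).mulVec v) ≤ C * l2norm v * r ^ m := by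
  have hr0 : 0 < r := hβ0.trans_lt hr
  have hrad : spectralRadius ℂ A < ENNReal.ofReal r := by
    refine lt_of_le_of_lt (b := ENNReal.ofReal β) ?_ ((ENNReal.ofReal_lt_ofReal_iff hr0).2 hr)
    refine iSup₂_le fun k hk => ?_
    rw [← enorm_eq_nnnorm, ← ofReal_norm]
    exact ENNReal.ofReal_le_ofReal (hA k hk)
  haveI : CompleteSpace (Matrix (Fin N) (Fin N) ℂ) := FiniteDimensional.complete ℂ _
  have hev := (spectrum.pow_norm_pow_one_div_tendsto_nhds_spectralRadius A).eventually_lt_const hrad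
  obtain ⟨n₀, hn₀⟩ := Filter.eventually_atTop.1 hev
  have hbig : ∀ n, n₀ + 1 ≤ n → ‖A ^ n‖ ≤ r ^ n := by
    intro n hn
    have h1 := (ENNReal.ofReal_lt_ofReal_iff hr0).1 (hn₀ n (by omega))
    have hn0 : n ≠ 0 := by omega
    have h2 := pow_le_pow_left₀ (by positivity) h1.le n
    rwa [one_div, Real.rpow_inv_natCast_pow (norm_nonneg _) hn0] at h2
  refine ⟨1 + ∑ n ∈ Finset.range (n₀ + 1), ‖A ^ n‖ / r ^ n, by positivity, fun m v => ?_⟩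
  have hm : ‖A ^ m‖ ≤ (1 + ∑ n ∈ Finset.range (n₀ + 1), ‖A ^ n‖ / r ^ n) * r ^ m := by
    rcases le_or_gt (n₀ + 1) m with h | h
    · refine (hbig m h).trans (le_mul_of_one_le_left (by positivity) ?_)
      have : 0 ≤ ∑ n ∈ Finset.range (n₀ + 1), ‖A ^ n‖ / r ^ n := by positivity
      linarith
    · rw [← div_le_iff₀ (by positivity)]
      have := Finset.single_le_sum (f := fun n => ‖A ^ n‖ / r ^ n)
        (fun i _ => by positivity) (Finset.mem_range.2 h)
      linarith
  have h3 : l2norm ((A ^ m).mulVec v) ≤ ‖A ^ m‖ * l2norm v :=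
    Matrix.l2_opNorm_mulVec (A ^ m) ((EuclideanSpace.equiv (Fin N) ℂ).symm v)
  have h4 : 0 ≤ l2norm v := norm_nonneg _
  calc _ ≤ ‖A ^ m‖ * l2norm v := h3
    _ ≤ _ := mul_le_mul_of_nonneg_right hm h4
    _ = _ := by ring

/-- convergence of the ICPA algorithm: if the joint spectrum of the commuting
matrices `S₁,…,S_d` lies in the real cube `[μ, ν]`, `H = h(S₁,…,S_d)` is invertible, and `g` is
a multivariate polynomial with `β = sup_{t ∈ [μ,ν]} |1 − h(t) g(t)| < 1`, then for every
`r ∈ (β, 1)` there is `C > 0` such that for every `b` the iterates of the iterative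
approximation algorithm with `G = g(S₁,…,S_d)` satisfy
`‖x⁽ᵐ⁾ − H⁻¹ b‖₂ ≤ C ‖H⁻¹ b‖₂ rᵐ` for all `m ≥ 1`. -/
theorem ICPA_exponential_convergence {N d : ℕ}
    (S : Fin d → Matrix (Fin N) (Fin N) ℂ)
    (hcomm : ∀ k k' : Fin d, Commute (S k) (S k'))
    (U : Matrix (Fin N) (Fin N) ℂ) (hU : U ∈ Matrix.unitaryGroup (Fin N) ℂ)
    (htri : ∀ k : Fin d, (U * S k * Uᴴ).BlockTriangular (id : Fin N → Fin N))
    (lam : Fin N → Fin d → ℂ)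
    (hlam : ∀ (i : Fin N) (k : Fin d), lam i k = (U * S k * Uᴴ) i i)
    (μ ν : Fin d → ℝ)
    (hspec : ∀ (i : Fin N) (k : Fin d),
      ∃ t : ℝ, lam i k = (t : ℂ) ∧ t ∈ Set.Icc (μ k) (ν k))
    (h g : MvPolynomial (Fin d) ℂ)
    (H : Matrix (Fin N) (Fin N) ℂ) (hH : H = polyFilter S h) (hinv : IsUnit H)
    (β : ℝ)
    (hβ : β = sSup ((fun t : Fin d → ℝ =>
      ‖1 - MvPolynomial.eval (fun k => (t k : ℂ)) h *
        MvPolynomial.eval (fun k => (t k : ℂ)) g‖) ''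
      {t : Fin d → ℝ | ∀ k : Fin d, t k ∈ Set.Icc (μ k) (ν k)}))
    (hβ1 : β < 1) :
    ∀ r : ℝ, β < r → r < 1 →
      ∃ C : ℝ, 0 < C ∧
        ∀ (b : Fin N → ℂ) (e z x : ℕ → Fin N → ℂ),
          e 0 = b → x 0 = 0 →
          (∀ m : ℕ, z (m + 1) = (polyFilter S g).mulVec (e m)) →
          (∀ m : ℕ, e (m + 1) = e m - H.mulVec (z (m + 1))) →
          (∀ m : ℕ, x (m + 1) = x m + z (m + 1)) →
          ∀ m : ℕ, 1 ≤ m →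
            l2norm (x m - H⁻¹.mulVec b) ≤ C * l2norm (H⁻¹.mulVec b) * r ^ m := by
  intro r hβr hr1
  have hU1 : Uᴴ * U = 1 := (Matrix.mem_unitaryGroup_iff').1 hU
  have hU2 : U * Uᴴ = 1 := (Matrix.mem_unitaryGroup_iff).1 hU
  have hS : ∀ k, TriDiag U (S k) (fun i => lam i k) := fun k =>
    ⟨htri k, fun i => (hlam i k).symm⟩
  have hT := (TriDiag.one hU2).sub ((TriDiag.polyFilter hU1 hU2 S lam hS g).mul hU1
    (TriDiag.polyFilter hU1 hU2 S lam hS h))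
  rw [← hH] at hT
  have hβ0 : 0 ≤ β := by
    rw [hβ]
    apply Real.sSup_nonneg
    rintro _ ⟨t, _, rfl⟩
    exact norm_nonneg _
  have hcpt : IsCompact {t : Fin d → ℝ | ∀ k : Fin d, t k ∈ Set.Icc (μ k) (ν k)} := by
    have := isCompact_univ_pi fun k : Fin d => isCompact_Icc (a := μ k) (b := ν k)
    convert this using 1
    ext t
    simp only [Set.mem_setOf_eq, Set.mem_pi, Set.mem_univ, true_imp_iff]
  have hcont : ∀ p : MvPolynomial (Fin d) ℂ,
      Continuous fun t : Fin d → ℝ => MvPolynomial.eval (fun k => (t k : ℂ)) p := fun p =>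
    (MvPolynomial.continuous_eval p).comp (by fun_prop)
  have hbdd := (hcpt.image
    (f := fun t : Fin d → ℝ => ‖1 - MvPolynomial.eval (fun k => (t k : ℂ)) h *
        MvPolynomial.eval (fun k => (t k : ℂ)) g‖)
    (continuous_const.sub ((hcont h).mul (hcont g))).norm).bddAbove
  obtain ⟨C, hC, hbound⟩ := exists_pow_bound (1 - polyFilter S g * H) β r hβ0 hβr (by
    intro k hk
    obtain ⟨i, rfl⟩ := hT.mem_spectrum hU1 hU2 hk
    choose t ht1 ht2 using hspec i
    rw [hβ]
    refine le_csSup hbdd ⟨t, ht2, ?_⟩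
    have : lam i = fun k => (t k : ℂ) := funext ht1
    simp only [this, mul_comm])
  refine ⟨C, hC, ?_⟩
  intro b e z x he0 hx0 hz he hx m _
  have hHdet : IsUnit H.det := (Matrix.isUnit_iff_isUnit_det H).1 hinv
  have hHy : H.mulVec (H⁻¹.mulVec b) = b := by
    rw [Matrix.mulVec_mulVec, Matrix.mul_nonsing_inv _ hHdet, Matrix.one_mulVec]
  have hex : ∀ n, e n = b - H.mulVec (x n) := by
    intro n
    induction n with
    | zero => rw [he0, hx0, Matrix.mulVec_zero, sub_zero]
    | succ n ih => rw [he, hx, ih, Matrix.mulVec_add, sub_sub]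
  have hw : ∀ n, x n - H⁻¹.mulVec b
      = ((1 - polyFilter S g * H) ^ n).mulVec (-(H⁻¹.mulVec b)) := by
    intro n
    induction n with
    | zero => rw [hx0, pow_zero, Matrix.one_mulVec, zero_sub]
    | succ n ih =>
      rw [pow_succ', ← Matrix.mulVec_mulVec, ← ih, Matrix.sub_mulVec, Matrix.one_mulVec,
        ← Matrix.mulVec_mulVec, Matrix.mulVec_sub, hHy, hx, hz, hex,
        ← neg_sub b, Matrix.mulVec_neg]
      abel
  have hn : l2norm (-(H⁻¹.mulVec b)) = l2norm (H⁻¹.mulVec b) := by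
    simp [l2norm]
  rw [hw m, ← hn]
  exact hbound m _
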